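/- Let n > n₁ > n₂ be nonnegative integers. Set λ₁ := α/β and λ₂ := (C_α/C_β) · [((1 − α^{n₁−n})(1 − γ^{n₂−n}) − (1 − α^{n₂−n})(1 − γ^{n₁−n})) / ((1 − β^{n₁−n})(1 − γ^{n₂−n}) − (1 − β^{n₂−n})(1 − γ^{n₁−n}))], and assume the denominator of this fraction is nonzero. If λ₁ and λ₂ are multiplicatively dependent, i.e. there exist integers A, B, not both zero, with λ₁^A = λ₂^B, then there is an integer t with |t| < 80n + 244 such that λ₂ = z^t or λ₂ = −z^t, where z is the unique element of K = ℚ(α, β) with z³ = α/β. -/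

import Mathlib

/-!
Let `K = ℚ(α, β)` and suppose `λ₁ ^ A = λ₂ ^ B`. Since `|α / β| > 1`, the exponent `B` is nonzero, and
`λ₂ ≠ 0`. Taking squared moduli gives `u ^ B = α ^ (3 A)` for `u = |λ₂|²`, the relative norm of `λ₂`
to the real cubic field `ℚ(α)`. As `α` is not a proper power in `ℚ(α)` (`TribRoots.not_power`: an
`m`-th root of `α` with `m ≥ 2` would be a root of an integral cubic with very small coefficients),
`u = α ^ t` for an integer `t` with `3 A = t B` (`TribRoots.eq_zpow_of_zpow_eq`). Since `|z|² = α`, the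
quotient `λ₂ / z ^ t` is then a root of unity of `K`, hence `±1` (`TribRoots.root_of_unity`).

The bound on `t` comes from `|λ₂|² = α ^ t`. The numerator and denominator of `λ₂` are, up to constants,
conjugate algebraic integers `G(β)` and `G(α)` with `G ∈ ℤ[X]` (`TribRoots.crossDet_factor`). Their
moduli are at most exponential in `n`, and `|G(α) G(β) G(γ)| ≥ 1` provides the matching lower bounds
(`TribRoots.exponent_bound`).
-/

/-- The quantity `λ₂` from Lemma on multiplicative dependence:
`(C_α/C_β) · [((1−α^{n₁−n})(1−γ^{n₂−n}) − (1−α^{n₂−n})(1−γ^{n₁−n})) /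
((1−β^{n₁−n})(1−γ^{n₂−n}) − (1−β^{n₂−n})(1−γ^{n₁−n}))]`,
where `C_w = (w−1)/(4w−6)`. -/
noncomputable def lam2 (α β γ : ℂ) (n n₁ n₂ : ℕ) : ℂ :=
  ((α - 1) / (4 * α - 6)) / ((β - 1) / (4 * β - 6)) *
    (((1 - α ^ ((n₁ : ℤ) - (n : ℤ))) * (1 - γ ^ ((n₂ : ℤ) - (n : ℤ))) -
        (1 - α ^ ((n₂ : ℤ) - (n : ℤ))) * (1 - γ ^ ((n₁ : ℤ) - (n : ℤ)))) /
      ((1 - β ^ ((n₁ : ℤ) - (n : ℤ))) * (1 - γ ^ ((n₂ : ℤ) - (n : ℤ))) -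
        (1 - β ^ ((n₂ : ℤ) - (n : ℤ))) * (1 - γ ^ ((n₁ : ℤ) - (n : ℤ)))))

section

open Polynomial

/-! ### The cubic and its roots -/

/-- The three roots of `X³ - X² - X - 1`: the real root `a` (the `α` of the theorem) and the complex
conjugate pair `β`, `γ`. The cubic is recorded through Vieta's formulas. -/
structure TribRoots (a : ℝ) (β γ : ℂ) : Prop where
  lo : 1.83 < a
  hi : a < 1.84
  conj : γ = (starRingEnd ℂ) β
  im_ne : β.im ≠ 0
  e1 : (a : ℂ) + β + γ = 1
  e2 : (a : ℂ) * β + a * γ + β * γ = -1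
  e3 : (a : ℂ) * β * γ = 1

/-- The minimal polynomial of the three roots. -/
noncomputable def tribPoly : ℚ[X] := X ^ 3 - X ^ 2 - X - 1

lemma tribPoly_monic : tribPoly.Monic := by
  unfold tribPoly; monicity!

lemma tribPoly_natDegree : tribPoly.natDegree = 3 := by
  unfold tribPoly; compute_degree!

/-- An algebraic integer that is a rational number is an integer. -/
lemma exists_int_of_isIntegral_rat {x : ℂ} {r : ℚ} (hx : IsIntegral ℤ x) (hr : x = r) :
    ∃ k : ℤ, x = k := by
  have h : IsIntegral ℤ r := by
    rw [← isIntegral_algebraMap_iff (algebraMap ℚ ℂ).injective]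
    simpa [← hr] using hx
  obtain ⟨k, hk⟩ := IsIntegrallyClosed.isIntegral_iff.mp h
  exact ⟨k, by rw [hr, ← hk]; simp⟩

lemma isIntegral_of_cubic {x : ℂ} (hx : x ^ 3 = x ^ 2 + x + 1) : IsIntegral ℤ x := by
  refine ⟨X ^ 3 - X ^ 2 - X - 1, by monicity!, ?_⟩
  simp only [eval₂_sub, eval₂_X_pow, eval₂_X, eval₂_one]
  linear_combination hx

/-- A rational root would be an integer `k` with `k * (k² - k - 1) = 1`, hence `±1`. -/
lemma cubic_ne_rat {x : ℂ} (hx : x ^ 3 = x ^ 2 + x + 1) (r : ℚ) : x ≠ r := by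
  intro hr
  obtain ⟨k, rfl⟩ := exists_int_of_isIntegral_rat (isIntegral_of_cubic hx) hr
  have h : k * (k ^ 2 - k - 1) = 1 := by
    have : k ^ 3 = k ^ 2 + k + 1 := by exact_mod_cast hx
    linear_combination this
  rcases Int.isUnit_iff.mp (IsUnit.of_mul_eq_one _ h) with rfl | rfl <;> norm_num at h

lemma tribPoly_irreducible : Irreducible tribPoly := by
  apply Polynomial.irreducible_of_degree_le_three_of_not_isRoot
  · rw [tribPoly_natDegree]; decide
  · intro r hr
    refine cubic_ne_rat (x := (r : ℂ)) ?_ r rfl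
    simp only [tribPoly, IsRoot, eval_sub, eval_pow, eval_X, eval_one] at hr
    have : r ^ 3 = r ^ 2 + r + 1 := by linear_combination hr
    exact_mod_cast this

lemma aeval_tribPoly {x : ℂ} (hx : x ^ 3 = x ^ 2 + x + 1) : aeval x tribPoly = 0 := by
  simp only [tribPoly, map_sub, map_pow, aeval_X, map_one]
  linear_combination hx

/-- The roots of the cubic are conjugate over `ℚ`: they satisfy the same polynomial relations. -/
lemma aeval_eq_zero_of_cubic {x y : ℂ} (hx : x ^ 3 = x ^ 2 + x + 1) (hy : y ^ 3 = y ^ 2 + y + 1)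
    {P : ℚ[X]} (hP : aeval x P = 0) : aeval y P = 0 := by
  have hm : minpoly ℚ x = tribPoly :=
    (minpoly.eq_of_irreducible_of_monic tribPoly_irreducible (aeval_tribPoly hx)
      tribPoly_monic).symm
  obtain ⟨Q, rfl⟩ := hm ▸ minpoly.dvd ℚ x hP
  simp [aeval_tribPoly hy]

namespace TribRoots

variable {a : ℝ} {β γ : ℂ}

lemma root_a (h : TribRoots a β γ) : (a : ℂ) ^ 3 = (a : ℂ) ^ 2 + a + 1 := by
  linear_combination (a : ℂ)^2 * h.e1 - a * h.e2 + h.e3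

lemma root_β (h : TribRoots a β γ) : β ^ 3 = β ^ 2 + β + 1 := by
  linear_combination β ^ 2 * h.e1 - β * h.e2 + h.e3

lemma root_γ (h : TribRoots a β γ) : γ ^ 3 = γ ^ 2 + γ + 1 := by
  linear_combination γ ^ 2 * h.e1 - γ * h.e2 + h.e3

lemma transfer (h : TribRoots a β γ) {P : ℚ[X]} (hP : aeval (a : ℂ) P = 0) : aeval β P = 0 ∧ aeval γ P = 0 :=
  ⟨aeval_eq_zero_of_cubic h.root_a h.root_β hP, aeval_eq_zero_of_cubic h.root_a h.root_γ hP⟩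

/-- The trace from `ℚ(α)` of a polynomial in `α` is rational; the power sums of the roots satisfy
the recurrence of the cubic. -/
lemma trace_rat (h : TribRoots a β γ) (P : ℚ[X]) : ∃ r : ℚ, aeval (a : ℂ) P + aeval β P + aeval γ P = r := by
  have hpow (n : ℕ) : ∃ r s t : ℚ, (a : ℂ) ^ n + β ^ n + γ ^ n = r ∧
      (a : ℂ) ^ (n + 1) + β ^ (n + 1) + γ ^ (n + 1) = s ∧
      (a : ℂ) ^ (n + 2) + β ^ (n + 2) + γ ^ (n + 2) = t := by
    induction n with
    | zero =>
      refine ⟨3, 1, 3, by norm_num, by simpa using h.e1, ?_⟩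
      push_cast
      linear_combination ((a : ℂ) + β + γ + 1) * h.e1 - 2 * h.e2
    | succ n ih =>
      obtain ⟨r, s, t, hr, hs, ht⟩ := ih
      refine ⟨s, t, r + s + t, hs, ht, ?_⟩
      push_cast
      linear_combination hr + hs + ht + (a : ℂ) ^ n * h.root_a + β ^ n * h.root_β
        + γ ^ n * h.root_γ
  induction P using Polynomial.induction_on' with
  | add p q hp hq =>
    obtain ⟨r, hr⟩ := hp
    obtain ⟨s, hs⟩ := hq
    exact ⟨r + s, by push_cast; simp only [map_add]; linear_combination hr + hs⟩
  | monomial n c =>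
    obtain ⟨r, -, -, hr, -⟩ := hpow n
    refine ⟨c * r, ?_⟩
    simp only [aeval_monomial, eq_ratCast]
    push_cast
    linear_combination (c : ℂ) * hr

/-- The second elementary symmetric function of the conjugates, by Newton's identity. -/
lemma pair_rat (h : TribRoots a β γ) (P : ℚ[X]) : ∃ r : ℚ, aeval (a : ℂ) P * aeval β P + aeval (a : ℂ) P * aeval γ P
    + aeval β P * aeval γ P = r := by
  obtain ⟨r, hr⟩ := h.trace_rat P
  obtain ⟨s, hs⟩ := h.trace_rat (P ^ 2)
  refine ⟨(r ^ 2 - s) / 2, ?_⟩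
  push_cast
  rw [← hr, ← hs]
  simp only [map_pow]
  ring

/-- The norm from `ℚ(α)`, by Newton's identity. -/
lemma norm_rat (h : TribRoots a β γ) (P : ℚ[X]) : ∃ r : ℚ, aeval (a : ℂ) P * aeval β P * aeval γ P = r := by
  obtain ⟨r, hr⟩ := h.trace_rat P
  obtain ⟨s, hs⟩ := h.trace_rat (P ^ 2)
  obtain ⟨t, ht⟩ := h.trace_rat (P ^ 3)
  refine ⟨(r ^ 3 - 3 * r * s + 2 * t) / 6, ?_⟩
  push_cast
  rw [← hr, ← hs, ← ht]
  simp only [map_pow]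
  ring

lemma aeval_γ (h : TribRoots a β γ) (P : ℚ[X]) : aeval γ P = (starRingEnd ℂ) (aeval β P) := by
  rw [h.conj]
  simp [aeval_def, eval₂_eq_sum_range]

lemma aeval_real (P : ℚ[X]) : aeval (a : ℂ) P = ((aeval a P : ℝ) : ℂ) := by
  simp [aeval_def, eval₂_eq_sum_range]

lemma re_β (h : TribRoots a β γ) : 2 * β.re = 1 - a := by
  have := congrArg Complex.re h.e1
  simp [h.conj] at this
  linarith

lemma normSq_β (h : TribRoots a β γ) : a * Complex.normSq β = 1 := by
  have := h.e3
  rw [h.conj, mul_assoc, Complex.mul_conj] at this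
  exact_mod_cast this

/-- `α` is not a proper power of a positive element `v` of `ℚ(α)`. Such a `v` lies in `(1, 1.3565)`
and is a root of a cubic `X³ - A X² + B X - 1` over `ℤ` whose other two roots are complex conjugates
of modulus `v^(-1/2)`. This bounds `A`, `B` and leaves only `X³ - X - 1`, whose real root
`1.3247…` has square below and cube above `α`. -/
lemma not_power (h : TribRoots a β γ) (P : ℚ[X]) {v : ℝ} (hv : 0 < v) (hP : aeval (a : ℂ) P = v) {m : ℕ} (hm : 2 ≤ m)
    (hvm : v ^ m = a) : False := by
  have hlo := h.lo
  have hhi := h.hi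
  have h0 : aeval (a : ℂ) (P ^ m - X) = 0 := by
    simp only [map_sub, map_pow, aeval_X, hP]
    rw [← hvm]; push_cast; ring
  have hβm : (aeval β P) ^ m = β := by
    have := (h.transfer h0).1
    simpa [sub_eq_zero] using this
  have hγm : (aeval γ P) ^ m = γ := by
    have := (h.transfer h0).2
    simpa [sub_eq_zero] using this
  have i1 : IsIntegral ℤ (v : ℂ) := by
    refine IsIntegral.of_pow (n := m) (by omega) ?_
    rw [← Complex.ofReal_pow, hvm]; exact isIntegral_of_cubic h.root_a
  have i2 : IsIntegral ℤ (aeval β P) :=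
    IsIntegral.of_pow (n := m) (by omega) (by rw [hβm]; exact isIntegral_of_cubic h.root_β)
  have i3 : IsIntegral ℤ (aeval γ P) :=
    IsIntegral.of_pow (n := m) (by omega) (by rw [hγm]; exact isIntegral_of_cubic h.root_γ)
  obtain ⟨r, hr⟩ := h.trace_rat P
  obtain ⟨s, hs⟩ := h.pair_rat P
  rw [hP] at hr hs
  obtain ⟨A, hA⟩ := exists_int_of_isIntegral_rat ((i1.add i2).add i3) hr
  obtain ⟨B, hB⟩ := exists_int_of_isIntegral_rat
    (((i1.mul i2).add (i1.mul i3)).add (i2.mul i3)) hs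
  rw [h.aeval_γ] at hA hB
  -- `y` is the conjugate of `v` attached to `β`; the remaining one is its complex conjugate
  generalize aeval β P = y at *
  have hy : v * Complex.normSq y = 1 := by
    have : (v * Complex.normSq y) ^ m = 1 := by
      rw [mul_pow, hvm, ← map_pow, hβm, h.normSq_β]
    exact (pow_eq_one_iff_of_nonneg (mul_nonneg hv.le (Complex.normSq_nonneg _))
      (by omega)).mp this
  have hA' : v + 2 * y.re = A := by
    have := congrArg Complex.re hA
    simp at this; linarith
  have hB' : 2 * v * y.re + Complex.normSq y = B := by
    have := congrArg Complex.re hB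
    simp [Complex.mul_conj] at this; linarith
  have hre : y.re ^ 2 ≤ Complex.normSq y := by
    rw [Complex.normSq_apply]; nlinarith [sq_nonneg y.im]
  have hre' : v * y.re ^ 2 ≤ 1 := by nlinarith
  have hv1 : 1 < v := by
    by_contra! hle
    have := pow_le_one₀ (n := m) hv.le hle
    linarith
  have hv2 : v ^ 2 ≤ a := hvm ▸ pow_le_pow_right₀ hv1.le hm
  have hv3 : v < 1.3565 := by nlinarith
  have hcub : v ^ 3 - A * v ^ 2 + B * v - 1 = 0 := by
    rw [← hA', ← hB']; linear_combination hy
  have hsq : y.re ^ 2 < 1 := by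
    by_contra! hge
    nlinarith
  obtain ⟨hre2, hre1⟩ := abs_lt.mp ((sq_lt_one_iff_abs_lt_one _).mp hsq)
  have hA1 : (-1 : ℤ) < A := by
    have : (-1 : ℝ) < A := by linarith
    exact_mod_cast this
  have hA2 : A < (4 : ℤ) := by
    have : (A : ℝ) < 4 := by linarith
    exact_mod_cast this
  have hBlo (k : ℤ) (hk : v * k < v * B) : k < B := by
    have := lt_of_mul_lt_mul_left hk hv.le
    exact_mod_cast this
  have hBhi (k : ℤ) (hk : v * B < v * k) : B < k := by
    have := lt_of_mul_lt_mul_left hk hv.le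
    exact_mod_cast this
  interval_cases A <;> push_cast at hcub
  -- `A = 0`: the bounds leave the cubic `X³ - X - 1`
  · have b1 := hBlo (-2) (by push_cast; nlinarith)
    have b2 := hBhi 0 (by push_cast; nlinarith)
    have : B = -1 := by omega
    subst this
    push_cast at hcub
    have : m < 3 := by
      by_contra! h3
      have := pow_le_pow_right₀ hv1.le h3
      nlinarith
    have : m = 2 := by omega
    subst this
    nlinarith
  · have b1 := hBlo 0 (by push_cast; nlinarith)
    have b2 := hBhi 1 (by push_cast; nlinarith)
    omega
  · have b1 := hBlo 1 (by push_cast; nlinarith)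
    have b2 := hBhi 2 (by push_cast; nlinarith)
    omega
  · have b1 := hBlo 2 (by push_cast; nlinarith)
    have b2 := hBhi 3 (by push_cast; nlinarith [pow_pos (sub_pos.mpr hv1) 3])
    omega

end TribRoots

/-! ### The splitting field, powers of `α` and roots of unity -/

namespace TribRoots

open IntermediateField

variable {a : ℝ} {β γ : ℂ}

lemma a_ne (h : TribRoots a β γ) : (a : ℂ) ≠ 0 := by
  have := h.lo
  exact_mod_cast (by linarith : a ≠ 0)

lemma β_ne_γ (h : TribRoots a β γ) : γ - β ≠ 0 := by
  intro h0
  have := congrArg Complex.im h0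
  rw [h.conj] at this
  simp at this
  exact h.im_ne (by linarith)

lemma exists_poly (h : TribRoots a β γ) {x : ℂ} (hx : x ∈ ℚ⟮(a : ℂ)⟯) : ∃ P : ℚ[X], aeval (a : ℂ) P = x := by
  have halg : IsIntegral ℚ (a : ℂ) := (isIntegral_of_cubic h.root_a).tower_top
  rw [← mem_toSubalgebra, adjoin_simple_toSubalgebra_of_isAlgebraic halg.isAlgebraic,
    Algebra.adjoin_singleton_eq_range_aeval] at hx
  exact hx

lemma real_of_mem (h : TribRoots a β γ) {x : ℂ} (hx : x ∈ ℚ⟮(a : ℂ)⟯) : ∃ r : ℝ, x = r := by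
  obtain ⟨P, rfl⟩ := h.exists_poly hx
  exact ⟨_, aeval_real P⟩

/-- `1, β` span the splitting field over `ℚ(α)`: `β` is a root of `X² - (1 - α) X + α⁻¹`. -/
lemma mem_splitting (h : TribRoots a β γ) {x : ℂ} (hx : x ∈ adjoin ℚ ({(a : ℂ), β} : Set ℂ)) :
    ∃ p ∈ ℚ⟮(a : ℂ)⟯, ∃ q ∈ ℚ⟮(a : ℂ)⟯, x = p + q * β := by
  have ha : (a : ℂ) ∈ ℚ⟮(a : ℂ)⟯ := mem_adjoin_simple_self ℚ _
  have h0 := h.a_ne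
  have hβγ : β * γ = (a : ℂ)⁻¹ := by
    field_simp; linear_combination h.e3
  have hsq : β ^ 2 = (1 - a) * β - (a : ℂ)⁻¹ := by
    rw [← hβγ]; linear_combination β * h.e1
  induction hx using adjoin_induction with
  | mem x hx =>
    rcases hx with rfl | hx
    · exact ⟨_, ha, 0, zero_mem _, by ring⟩
    · rw [Set.mem_singleton_iff] at hx
      exact ⟨0, zero_mem _, 1, one_mem _, by rw [hx]; ring⟩
  | algebraMap r => exact ⟨_, _root_.algebraMap_mem _ r, 0, zero_mem _, by ring⟩
  | add x y _ _ hx hy =>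
    obtain ⟨p, hp, q, hq, rfl⟩ := hx
    obtain ⟨p', hp', q', hq', rfl⟩ := hy
    exact ⟨_, add_mem hp hp', _, add_mem hq hq', by ring⟩
  | mul x y _ _ hx hy =>
    obtain ⟨p, hp, q, hq, rfl⟩ := hx
    obtain ⟨p', hp', q', hq', rfl⟩ := hy
    refine ⟨p * p' - q * q' * (a : ℂ)⁻¹,
      sub_mem (mul_mem hp hp') (mul_mem (mul_mem hq hq') (inv_mem ha)),
      p * q' + q * p' + q * q' * (1 - a),
      add_mem (add_mem (mul_mem hp hq') (mul_mem hq hp'))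
        (mul_mem (mul_mem hq hq') (sub_mem (one_mem _) ha)), ?_⟩
    linear_combination q * q' * hsq
  | inv x _ hx =>
    obtain ⟨p, hp, q, hq, rfl⟩ := hx
    have hN : (p + q * β) * (p + q * γ) = p ^ 2 + p * q * (1 - a) + q ^ 2 * (a : ℂ)⁻¹ := by
      rw [← hβγ]; linear_combination p * q * h.e1
    have hNmem : p ^ 2 + p * q * (1 - a) + q ^ 2 * (a : ℂ)⁻¹ ∈ ℚ⟮(a : ℂ)⟯ :=
      add_mem (add_mem (pow_mem hp 2) (mul_mem (mul_mem hp hq) (sub_mem (one_mem _) ha)))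
        (mul_mem (pow_mem hq 2) (inv_mem ha))
    set N := p ^ 2 + p * q * (1 - a) + q ^ 2 * (a : ℂ)⁻¹
    refine ⟨(p + q * (1 - a)) * N⁻¹,
      mul_mem (add_mem hp (mul_mem hq (sub_mem (one_mem _) ha))) (inv_mem hNmem),
      -q * N⁻¹, mul_mem (neg_mem hq) (inv_mem hNmem), ?_⟩
    have hc : (p + q * (1 - a)) * N⁻¹ + -q * N⁻¹ * β = (p + q * γ) * N⁻¹ := by
      linear_combination -q * N⁻¹ * h.e1
    rw [hc, ← hN]
    by_cases hx : p + q * β = 0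
    · simp [hx]
    · have hx' : p + q * γ ≠ 0 := by
        obtain ⟨p, rfl⟩ := h.real_of_mem hp
        obtain ⟨q, rfl⟩ := h.real_of_mem hq
        intro h0
        apply hx
        have := congrArg (starRingEnd ℂ) h0
        simpa [h.conj] using this
      field_simp

/-- `|x|² = x * conj x` is the relative norm of `x` to the real cubic field `ℚ(α)`. -/
lemma normSq_mem (h : TribRoots a β γ) {p q : ℂ} (hp : p ∈ ℚ⟮(a : ℂ)⟯) (hq : q ∈ ℚ⟮(a : ℂ)⟯) :
    (Complex.normSq (p + q * β) : ℂ) ∈ ℚ⟮(a : ℂ)⟯ := by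
  have ha : (a : ℂ) ∈ ℚ⟮(a : ℂ)⟯ := mem_adjoin_simple_self ℚ _
  have h0 := h.a_ne
  have : (Complex.normSq (p + q * β) : ℂ) =
      p ^ 2 + p * q * (1 - a) + q ^ 2 * (a : ℂ)⁻¹ := by
    have hβγ : β * γ = (a : ℂ)⁻¹ := by
      field_simp; linear_combination h.e3
    obtain ⟨p, rfl⟩ := h.real_of_mem hp
    obtain ⟨q, rfl⟩ := h.real_of_mem hq
    rw [← Complex.mul_conj, ← hβγ]
    simp only [map_add, map_mul, Complex.conj_ofReal, ← h.conj]
    linear_combination (p : ℂ) * q * h.e1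
  rw [this]
  exact add_mem (add_mem (pow_mem hp 2) (mul_mem (mul_mem hp hq) (sub_mem (one_mem _) ha)))
        (mul_mem (pow_mem hq 2) (inv_mem ha))

/-- A positive element of `ℚ(α)` multiplicatively dependent on `α` is an integral power of `α`.
Writing `B = d m`, `E = d k` with `k, m` coprime, Bézout's identity yields an `m`-th root of `α` in
`ℚ(α)`, so `m = ±1` by `not_power`. -/
lemma eq_zpow_of_zpow_eq (h : TribRoots a β γ) {u : ℝ} (hu : 0 < u) (hmem : (u : ℂ) ∈ ℚ⟮(a : ℂ)⟯) {B E : ℤ}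
    (hB : B ≠ 0) (hBE : u ^ B = a ^ E) : ∃ k : ℤ, u = a ^ k ∧ E = k * B := by
  have hlo := h.lo
  have ha0 : 0 < a := by linarith
  have hlog : 0 < Real.log a := Real.log_pos (by linarith)
  have hL : B * Real.log u = E * Real.log a := by
    simpa [Real.log_zpow] using congrArg Real.log hBE
  obtain ⟨m, hm⟩ : (Int.gcd E B : ℤ) ∣ B := Int.gcd_dvd_right ..
  obtain ⟨k, hk⟩ : (Int.gcd E B : ℤ) ∣ E := Int.gcd_dvd_left ..
  have hd : (Int.gcd E B : ℤ) ≠ 0 := by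
    intro h0; rw [h0] at hm; simp at hm; exact hB hm
  have hbez := Int.gcd_eq_gcd_ab E B
  set d : ℤ := (Int.gcd E B : ℤ)
  set s := Int.gcdA E B
  set r := Int.gcdB E B
  have hbez' : k * s + m * r = 1 := by
    apply mul_left_cancel₀ hd
    linear_combination (-s) * hk - r * hm - hbez
  have hm0 : m ≠ 0 := by rintro rfl; simp at hm; exact hB hm
  have hL' : m * Real.log u = k * Real.log a := by
    have hd' : (d : ℝ) ≠ 0 := by exact_mod_cast hd
    apply mul_left_cancel₀ hd'
    rw [hm, hk] at hL
    push_cast at hL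
    linear_combination hL
  -- `u ^ s * a ^ r` is an `m`-th root of `a`
  have hv0 : 0 < u ^ s * a ^ r := by positivity
  have hvlog : m * Real.log (u ^ s * a ^ r) = Real.log a := by
    rw [Real.log_mul (by positivity) (by positivity), Real.log_zpow, Real.log_zpow]
    have : (k : ℝ) * s + m * r = 1 := by exact_mod_cast hbez'
    linear_combination (s : ℝ) * hL' + Real.log a * this
  have hvmem : ((u ^ s * a ^ r : ℝ) : ℂ) ∈ ℚ⟮(a : ℂ)⟯ := by
    push_cast
    exact mul_mem (zpow_mem hmem _) (zpow_mem (mem_adjoin_simple_self ℚ _) _)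
  -- a negative `m` is handled by passing to the inverse of the root
  have key : ∀ v : ℝ, 0 < v → (v : ℂ) ∈ ℚ⟮(a : ℂ)⟯ → (m.natAbs : ℝ) * Real.log v = Real.log a →
      m.natAbs = 1 := by
    intro v hv hvm hl
    obtain ⟨P, hP⟩ := h.exists_poly hvm
    by_contra hne
    refine h.not_power P hv hP (m := m.natAbs) (by omega) ?_
    rw [← Real.log_pow] at hl
    exact Real.log_injOn_pos (by simpa using pow_pos hv _) (by simpa using ha0) hl
  have hm1 : m.natAbs = 1 := by
    rcases le_total 0 m with h1 | h1
    · apply key _ hv0 hvmem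
      rw [← hvlog]
      rw [Nat.cast_natAbs, abs_of_nonneg h1]
    · apply key (u ^ s * a ^ r)⁻¹ (inv_pos.mpr hv0) (by push_cast at hvmem ⊢; exact inv_mem hvmem)
      rw [← hvlog, Real.log_inv]
      rw [Nat.cast_natAbs, abs_of_nonpos h1]
      push_cast
      ring
  have hmm : m * m = 1 := by
    rcases Int.natAbs_eq m with h' | h' <;> rw [h', hm1] <;> norm_num
  refine ⟨k * m, ?_, ?_⟩
  · apply Real.log_injOn_pos (by simpa using hu) (by simpa using zpow_pos ha0 _)
    rw [Real.log_zpow]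
    have : (m : ℝ) * m = 1 := by exact_mod_cast hmm
    push_cast
    linear_combination (m : ℝ) * hL' - Real.log u * this
  · rw [hm]; linear_combination hk - d * k * hmm

/-- The cubic field contains no square root of `D`: the conjugates of such a root would all be
`±√D`, so their rational sum would square to `D` or `9 D`. -/
lemma sq_ne (h : TribRoots a β γ) (P : ℚ[X]) {D : ℕ} (h1 : ¬ IsSquare D) (h9 : ¬ IsSquare (9 * D)) :
    (aeval (a : ℂ) P) ^ 2 ≠ D := by
  intro hD
  have h0 : aeval (a : ℂ) (P ^ 2 - C (D : ℚ)) = 0 := by simp [hD]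
  have hβ : (aeval β P) ^ 2 = D := by simpa [sub_eq_zero] using (h.transfer h0).1
  have hγ : (aeval γ P) ^ 2 = D := by simpa [sub_eq_zero] using (h.transfer h0).2
  obtain ⟨r, hr⟩ := h.trace_rat P
  have hr2 : (r : ℂ) ^ 2 = D ∨ (r : ℂ) ^ 2 = 9 * D := by
    rw [← hr]
    rcases sq_eq_sq_iff_eq_or_eq_neg.mp (hβ.trans hD.symm) with e | e <;>
    rcases sq_eq_sq_iff_eq_or_eq_neg.mp (hγ.trans hD.symm) with e' | e' <;> rw [e, e']
    · right; linear_combination 9 * hD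
    all_goals left; linear_combination hD
  rcases hr2 with e | e
  · apply h1
    have : r ^ 2 = D := by exact_mod_cast e
    exact Rat.isSquare_natCast_iff.mp ⟨r, by rw [← this]; ring⟩
  · apply h9
    have : r ^ 2 = 9 * D := by exact_mod_cast e
    exact Rat.isSquare_natCast_iff.mp ⟨r, by push_cast; rw [← this]; ring⟩

/-- An element of `ℚ(α)` whose conjugates at `β` and `γ` coincide is rational. -/
lemma rat_of_real (h : TribRoots a β γ) (P : ℚ[X]) (hP : aeval β P = aeval γ P) : ∃ r : ℚ, aeval (a : ℂ) P = r := by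
  have hdeg : (P %ₘ tribPoly).natDegree < 3 := by
    rw [← tribPoly_natDegree]
    exact natDegree_modByMonic_lt _ tribPoly_monic (by
      intro h1; have := tribPoly_natDegree; rw [h1] at this; simp at this)
  have hroot (x : ℂ) (hx : x ^ 3 = x ^ 2 + x + 1) : aeval x P = aeval x (P %ₘ tribPoly) := by
    conv_lhs => rw [← modByMonic_add_div P tribPoly]
    simp [aeval_tribPoly hx]
  rw [hroot _ h.root_β, hroot _ h.root_γ] at hP
  rw [hroot _ h.root_a]
  simp only [aeval_eq_sum_range' hdeg, Finset.sum_range_succ, Finset.sum_range_zero,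
    Rat.smul_def] at hP ⊢
  generalize (P %ₘ tribPoly).coeff 0 = c0 at *
  generalize (P %ₘ tribPoly).coeff 1 = c1 at *
  generalize (P %ₘ tribPoly).coeff 2 = c2 at *
  have h1 : (c1 : ℂ) + c2 * (1 - a) = 0 := by
    apply mul_left_cancel₀ h.β_ne_γ
    linear_combination -hP - (γ - β) * c2 * h.e1
  have hc2 : c2 = 0 := by
    by_contra hc
    have hc' : (c2 : ℂ) ≠ 0 := by exact_mod_cast hc
    refine cubic_ne_rat h.root_a (1 + c1 / c2) ?_
    push_cast
    field_simp
    linear_combination -h1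
  subst hc2
  have hc1 : c1 = 0 := by simpa using h1
  subst hc1
  exact ⟨c0, by simp⟩

/-- The only roots of unity in the splitting field are `±1`. If `x` is one, then `s = x + x⁻¹` lies
in `ℚ(α)` and its conjugates have the same shape, hence are real, so `s` is rational and thus an
integer in `[-2, 2]`. The values `s = 0, ±1` would give a square root of `44 * (4 - s²)`, that is of
`176` or `132`, in `ℚ(α)`, since the cubic has discriminant `-44`. -/
lemma root_of_unity (h : TribRoots a β γ) {x : ℂ} (hx : x ∈ adjoin ℚ ({(a : ℂ), β} : Set ℂ)) {N : ℕ} (hN : N ≠ 0)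
    (hxN : x ^ N = 1) : x = 1 ∨ x = -1 := by
  have ha : (a : ℂ) ∈ ℚ⟮(a : ℂ)⟯ := mem_adjoin_simple_self ℚ _
  have hnorm : ‖x‖ = 1 := Complex.norm_eq_one_of_pow_eq_one hxN hN
  have hx0 : x ≠ 0 := by rintro rfl; simp at hnorm
  have hns : Complex.normSq x = 1 := by rw [Complex.normSq_eq_norm_sq, hnorm]; norm_num
  have hinv : x⁻¹ = (starRingEnd ℂ) x := by rw [Complex.inv_def, hns]; simp
  obtain ⟨p, hp, q, hq, hxpq⟩ := h.mem_splitting hx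
  obtain ⟨p', hp'⟩ := h.real_of_mem hp
  obtain ⟨q', hq'⟩ := h.real_of_mem hq
  have hs : x + x⁻¹ = 2 * p + q * (1 - a) := by
    rw [hinv, hxpq, hp', hq']
    simp only [map_add, map_mul, Complex.conj_ofReal, ← h.conj]
    linear_combination (q' : ℂ) * h.e1
  have hsmem : x + x⁻¹ ∈ ℚ⟮(a : ℂ)⟯ := by
    rw [hs, two_mul]
    exact add_mem (add_mem hp hp) (mul_mem hq (sub_mem (one_mem _) ha))
  obtain ⟨P, hP⟩ := h.exists_poly hsmem
  -- `dickson 1 1 N` expresses `x ^ N + x⁻¹ ^ N` through `x + x⁻¹`; this carries `x ^ N = 1` over to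
  -- the conjugates of `x + x⁻¹`
  have hdick (y : ℂ) : aeval y ((dickson 1 (1 : ℚ) N).comp P - 2) =
      (dickson 1 (1 : ℂ) N).eval (aeval y P) - 2 := by
    rw [map_sub, aeval_comp, map_ofNat, aeval_def, eval₂_eq_eval_map, map_dickson, map_one]
  have hzero : aeval (a : ℂ) ((dickson 1 (1 : ℚ) N).comp P - 2) = 0 := by
    rw [hdick, hP, dickson_one_one_eval_add_inv _ _ (mul_inv_cancel₀ hx0), inv_pow, hxN]
    norm_num
  have hzβ := (h.transfer hzero).1
  rw [hdick] at hzβ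
  have hreal : aeval β P = aeval γ P := by
    rw [h.aeval_γ]
    generalize aeval β P = c at *
    -- write `c = y + y⁻¹` by solving a quadratic equation
    obtain ⟨t, ht⟩ := IsAlgClosed.exists_eq_mul_self (c ^ 2 - 4)
    have hyy : (c + t) / 2 * ((c - t) / 2) = 1 := by linear_combination ht / 4
    have hc : c = (c + t) / 2 + (c - t) / 2 := by ring
    generalize (c + t) / 2 = y at *
    generalize (c - t) / 2 = y' at *
    rw [hc, dickson_one_one_eval_add_inv _ _ hyy] at hzβ
    have hyyN : y ^ N * y' ^ N = 1 := by rw [← mul_pow, hyy, one_pow]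
    have hyN : y ^ N = 1 := by
      have : (y ^ N - 1) ^ 2 = 0 := by linear_combination y ^ N * hzβ - hyyN
      linear_combination pow_eq_zero_iff (two_ne_zero) |>.mp this
    have hynorm : ‖y‖ = 1 := Complex.norm_eq_one_of_pow_eq_one hyN hN
    have hyns : Complex.normSq y = 1 := by rw [Complex.normSq_eq_norm_sq, hynorm]; norm_num
    have hy' : y' = (starRingEnd ℂ) y := by
      rw [← inv_eq_of_mul_eq_one_right hyy, Complex.inv_def, hyns]; simp
    rw [hc, hy', map_add, Complex.conj_conj, add_comm]
  obtain ⟨r, hr⟩ := h.rat_of_real P hreal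
  rw [hP] at hr
  have hxi : IsIntegral ℤ x := IsIntegral.of_pow (Nat.pos_of_ne_zero hN) (hxN ▸ isIntegral_one)
  have hxi' : IsIntegral ℤ x⁻¹ := IsIntegral.of_pow (Nat.pos_of_ne_zero hN)
    (by rw [inv_pow, hxN, inv_one]; exact isIntegral_one)
  obtain ⟨k, hk⟩ := exists_int_of_isIntegral_rat (hxi.add hxi') hr
  have hre : 2 * x.re = k := by
    rw [hinv] at hk
    have := congrArg Complex.re hk
    simp at this; linarith
  have habs := Complex.abs_re_le_norm x
  rw [hnorm, abs_le] at habs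
  have hk1 : -2 ≤ k := by
    have : (-2 : ℝ) ≤ k := by linarith
    exact_mod_cast this
  have hk2 : k ≤ 2 := by
    have : (k : ℝ) ≤ 2 := by linarith
    exact_mod_cast this
  have hquad : x ^ 2 - k * x + 1 = 0 := by
    rw [← hk]; field_simp; ring
  have hnormpq : p ^ 2 + p * q * (1 - a) + q ^ 2 * ((a : ℂ) ^ 2 - a - 1) = 1 := by
    have hβγ : β * γ = (a : ℂ) ^ 2 - a - 1 := by
      apply mul_left_cancel₀ h.a_ne
      linear_combination h.e3 - h.root_a
    have h1 : x * (starRingEnd ℂ) x = 1 := by rw [Complex.mul_conj, hns]; simp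
    rw [hxpq, hp', hq'] at h1
    simp only [map_add, map_mul, Complex.conj_ofReal, ← h.conj] at h1
    rw [hp', hq', ← hβγ]
    linear_combination h1 - (p' : ℂ) * q' * h.e1
  have hk4 : 4 - (k : ℂ) ^ 2 = q ^ 2 * (3 * (a : ℂ) ^ 2 - 2 * a - 5) := by
    rw [← hk, hs]; linear_combination -4 * hnormpq
  -- `3a² - 2a - 5 = -(β - γ)²`, and `3a² - 2a - 1 = (a - β)(a - γ)`
  have hdisc : (3 * (a : ℂ) ^ 2 - 2 * a - 5) * (3 * (a : ℂ) ^ 2 - 2 * a - 1) ^ 2 = 44 := by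
    linear_combination (27 * (a : ℂ) ^ 3 - 27 * a ^ 2 - 27 * a + 49) * h.root_a
  obtain ⟨Q, hQ⟩ := h.exists_poly hq
  set R : ℚ[X] := Q * (3 * X ^ 2 - 2 * X - 5) * (3 * X ^ 2 - 2 * X - 1)
  have hR : aeval (a : ℂ) R = q * (3 * (a : ℂ) ^ 2 - 2 * a - 5) * (3 * (a : ℂ) ^ 2 - 2 * a - 1) := by
    simp only [R, map_mul, map_sub, map_pow, aeval_X, map_one, map_ofNat, hQ]
  have hsq : (aeval (a : ℂ) R) ^ 2 = 44 * (4 - (k : ℂ) ^ 2) := by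
    rw [hR, hk4]
    linear_combination q ^ 2 * (3 * (a : ℂ) ^ 2 - 2 * a - 5) * hdisc
  have no176 := h.sq_ne R (D := 176) (by norm_num) (by norm_num)
  have no132 := h.sq_ne R (D := 132) (by norm_num) (by norm_num)
  interval_cases k
  · right
    have : (x + 1) ^ 2 = 0 := by push_cast at hquad; linear_combination hquad
    linear_combination pow_eq_zero_iff (two_ne_zero) |>.mp this
  · exact absurd (by rw [hsq]; norm_num) no132
  · exact absurd (by rw [hsq]; norm_num) no176
  · exact absurd (by rw [hsq]; norm_num) no132
  · left
    have : (x - 1) ^ 2 = 0 := by push_cast at hquad; linear_combination hquad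
    linear_combination pow_eq_zero_iff (two_ne_zero) |>.mp this

end TribRoots

/-! ### Bounding the exponent -/

/-- Negative powers of the roots are integral combinations of `1, x, x²`, uniformly in the root,
because `x⁻¹ = x² - x - 1`. -/
lemma zpow_neg_eq (k : ℕ) : ∃ A B C : ℤ, ∀ x : ℂ, x ^ 3 = x ^ 2 + x + 1 →
    x ^ (-(k : ℤ)) = A + B * x + C * x ^ 2 := by
  induction k with
  | zero => exact ⟨1, 0, 0, fun x _ => by simp⟩
  | succ k ih =>
    obtain ⟨A, B, C, hk⟩ := ih
    refine ⟨B - A, C - A, A, fun x hx => ?_⟩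
    have hx0 : x ≠ 0 := by rintro rfl; norm_num at hx
    have : (-((k + 1 : ℕ) : ℤ)) = -(k : ℤ) - 1 := by push_cast; ring
    rw [this, zpow_sub_one₀ hx0, hk x hx]
    field_simp
    push_cast
    linear_combination -(A : ℂ) * hx

/-- The `2 × 2` determinant with rows `(1 - x ^ k₁, 1 - x ^ k₂)` and `(1 - y ^ k₁, 1 - y ^ k₂)`. The
fraction in `λ₂` is the quotient of its values at `(α, γ)` and `(β, γ)`. -/
noncomputable def crossDet (x y : ℂ) (k₁ k₂ : ℤ) : ℂ :=
  (1 - x ^ k₁) * (1 - y ^ k₂) - (1 - x ^ k₂) * (1 - y ^ k₁)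

namespace TribRoots

open IntermediateField

variable {a : ℝ} {β γ : ℂ}

/-- The determinant at two of the roots is their difference times an integral polynomial in the third
root, the same polynomial for each pair. This makes the numerator and denominator of `λ₂` comparable
to conjugate elements of `ℤ[α]` and `ℤ[β]`. -/
lemma crossDet_factor (h : TribRoots a β γ) (k₁ k₂ : ℕ) : ∃ G : ℤ[X],
    crossDet β γ (-k₁) (-k₂) = (γ - β) * aeval (a : ℂ) G ∧
    crossDet a γ (-k₁) (-k₂) = (γ - a) * aeval β G := by
  obtain ⟨A, B, C, h1⟩ := zpow_neg_eq k₁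
  obtain ⟨A', B', C', h2⟩ := zpow_neg_eq k₂
  refine ⟨Polynomial.C (-(1 - A) * B' + (1 - A') * B)
    + Polynomial.C (-(1 - A) * C' + (1 - A') * C) * (1 - X)
    + Polynomial.C (B * C' - B' * C) * (X ^ 2 - X - 1), ?_, ?_⟩
  · have hβγ : β * γ = (a : ℂ) ^ 2 - a - 1 := by
      linear_combination h.e2 - a * h.e1
    have hs : (a : ℂ) = 1 - β - γ := by linear_combination h.e1
    simp only [crossDet, h1 _ h.root_β, h1 _ h.root_γ, h2 _ h.root_β, h2 _ h.root_γ,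
      map_add, map_mul, map_sub, map_pow, aeval_X, map_one, map_neg,
      eq_intCast, map_intCast]
    rw [← hβγ, hs]
    ring
  · have hβγ : (a : ℂ) * γ = β ^ 2 - β - 1 := by
      linear_combination h.e2 - β * h.e1
    have hs : β = 1 - a - γ := by linear_combination h.e1
    simp only [crossDet, h1 _ h.root_a, h1 _ h.root_γ, h2 _ h.root_a, h2 _ h.root_γ,
      map_add, map_mul, map_sub, map_pow, aeval_X, map_one, map_neg,
      eq_intCast, map_intCast]
    rw [← hβγ, hs]
    ring

/-- The norm of a nonzero element of `ℤ[α]` is a nonzero integer. -/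
lemma one_le_norm (h : TribRoots a β γ) (G : ℤ[X]) (hG : aeval (a : ℂ) G ≠ 0) :
    1 ≤ ‖aeval (a : ℂ) G‖ * ‖aeval β G‖ ^ 2 := by
  have hmap (x : ℂ) : aeval x (G.map (algebraMap ℤ ℚ)) = aeval x G := aeval_map_algebraMap ℚ x G
  have hconj : aeval γ G = (starRingEnd ℂ) (aeval β G) := by
    rw [← hmap, ← hmap, h.aeval_γ]
  have hG' : aeval β G ≠ 0 := by
    rw [← hmap] at hG ⊢
    exact fun h0 => hG (aeval_eq_zero_of_cubic h.root_β h.root_a h0)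
  obtain ⟨r, hr⟩ := h.norm_rat (G.map (algebraMap ℤ ℚ))
  simp only [hmap] at hr
  have hintG (x : ℂ) (hx : x ^ 3 = x ^ 2 + x + 1) : IsIntegral ℤ (aeval x G) :=
    adjoin_le_integralClosure (isIntegral_of_cubic hx) (aeval_mem_adjoin_singleton ℤ x)
  obtain ⟨k, hk⟩ := exists_int_of_isIntegral_rat
    (((hintG _ h.root_a).mul (hintG _ h.root_β)).mul (hintG _ h.root_γ)) hr
  have hk0 : k ≠ 0 := by
    rintro rfl
    rw [hconj] at hk
    simp [hG, hG'] at hk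
  have hn := congrArg norm hk
  rw [norm_mul, norm_mul, hconj, Complex.norm_conj, Complex.norm_intCast] at hn
  have : (1 : ℝ) ≤ |(k : ℝ)| := by exact_mod_cast Int.one_le_abs hk0
  nlinarith

lemma norm_sub_sq (h : TribRoots a β γ) : ‖γ - a‖ ^ 2 = 3 * a ^ 2 - 2 * a - 1 ∧
    ‖γ - β‖ ^ 2 = 3 * a ^ 2 - 2 * a - 5 ∧ ‖β - 1‖ ^ 2 = a ^ 2 - 1 ∧
    ‖4 * β - 6‖ ^ 2 = 16 * a ^ 2 + 8 * a - 4 ∧ ‖β‖ ^ 2 = a⁻¹ := by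
  have ha0 : 0 < a := by linarith [h.lo]
  have hroot : a ^ 3 = a ^ 2 + a + 1 := by exact_mod_cast h.root_a
  have hns : Complex.normSq β = a ^ 2 - a - 1 := by
    apply mul_left_cancel₀ ha0.ne'
    linear_combination h.normSq_β - hroot
  have hns' := hns
  have hre := h.re_β
  rw [Complex.normSq_apply] at hns
  have h1 : β.im ^ 2 = a ^ 2 - a - 1 - β.re ^ 2 := by linarith
  have h2 : β.re = (1 - a) / 2 := by linarith
  simp only [← Complex.normSq_eq_norm_sq]
  refine ⟨?_, ?_, ?_, ?_, ?_⟩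
  · simp [Complex.normSq_apply, h.conj]
    ring_nf; rw [h1, h2]; ring
  · simp [Complex.normSq_apply, h.conj]
    ring_nf; rw [h1, h2]; ring
  · simp [Complex.normSq_apply]
    ring_nf; rw [h1, h2]; ring
  · simp [Complex.normSq_apply]
    ring_nf; rw [h1, h2]; ring
  · exact eq_inv_of_mul_eq_one_left (by linarith [h.normSq_β])

lemma one_sub_zpow_norm (h : TribRoots a β γ) {k n : ℕ} (hk : k ≤ n) : ‖1 - (a : ℂ) ^ (-(k : ℤ))‖ ≤ 2 ∧
    ‖1 - β ^ (-(k : ℤ))‖ ≤ 2 * a ^ n ∧ ‖1 - γ ^ (-(k : ℤ))‖ ≤ 2 * a ^ n := by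
  have hlo := h.lo
  have h1 : 1 ≤ a ^ n := one_le_pow₀ (by linarith)
  have hb : ‖β‖⁻¹ ≤ a := by
    have := h.norm_sub_sq.2.2.2.2
    have h2 : (‖β‖⁻¹) ^ 2 = a := by rw [inv_pow, this, inv_inv]
    nlinarith [inv_nonneg.mpr (norm_nonneg β)]
  have hβk : ‖β ^ (-(k : ℤ))‖ ≤ a ^ n := by
    rw [norm_zpow, zpow_neg, zpow_natCast, ← inv_pow]
    exact (pow_le_pow_left₀ (by positivity) hb k).trans (pow_le_pow_right₀ (by linarith) hk)
  have hγk : ‖γ ^ (-(k : ℤ))‖ ≤ a ^ n := by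
    rw [h.conj, ← map_zpow₀, Complex.norm_conj]; exact hβk
  have hak : ‖(a : ℂ) ^ (-(k : ℤ))‖ ≤ 1 := by
    rw [norm_zpow, Complex.norm_real, Real.norm_of_nonneg (by linarith), zpow_neg, zpow_natCast]
    exact inv_le_one_of_one_le₀ (one_le_pow₀ (by linarith))
  refine ⟨(norm_sub_le _ _).trans ?_, (norm_sub_le _ _).trans ?_, (norm_sub_le _ _).trans ?_⟩ <;>
  · rw [norm_one]; linarith

lemma crossDet_norm (h : TribRoots a β γ) {k₁ k₂ n : ℕ} (h1 : k₁ ≤ n) (h2 : k₂ ≤ n) :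
    ‖crossDet β γ (-k₁) (-k₂)‖ ≤ 8 * (a ^ n) ^ 2 ∧ ‖crossDet a γ (-k₁) (-k₂)‖ ≤ 8 * a ^ n := by
  have ha0 : 0 < a := by linarith [h.lo]
  obtain ⟨a1, b1, c1⟩ := h.one_sub_zpow_norm h1
  obtain ⟨a2, b2, c2⟩ := h.one_sub_zpow_norm h2
  constructor
  · refine (norm_sub_le _ _).trans ?_
    rw [norm_mul, norm_mul]
    have := mul_le_mul b1 c2 (norm_nonneg _) (by positivity)
    have := mul_le_mul b2 c1 (norm_nonneg _) (by positivity)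
    linarith
  · refine (norm_sub_le _ _).trans ?_
    rw [norm_mul, norm_mul]
    have := mul_le_mul a1 c2 (norm_nonneg _) (by positivity)
    have := mul_le_mul a2 c1 (norm_nonneg _) (by positivity)
    linarith

end TribRoots

namespace TribRoots

open IntermediateField

variable {a : ℝ} {β γ : ℂ}

/-- The part of `λ₂` independent of `n, n₁, n₂`; its modulus is about `6.2`. -/
lemma const_bounds (h : TribRoots a β γ) :
    1 ≤ ‖((a : ℂ) - 1) / (4 * a - 6) / ((β - 1) / (4 * β - 6)) * ((γ - a) / (γ - β))‖ ^ 2 ∧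
    ‖((a : ℂ) - 1) / (4 * a - 6) / ((β - 1) / (4 * β - 6)) * ((γ - a) / (γ - β))‖ ^ 2 ≤ 256 := by
  have hlo := h.lo
  have hhi := h.hi
  obtain ⟨n1, n2, n3, n4, -⟩ := h.norm_sub_sq
  have n5 : ‖(a : ℂ) - 1‖ ^ 2 = (a - 1) ^ 2 := by
    rw [← Complex.ofReal_one, ← Complex.ofReal_sub, Complex.norm_real, Real.norm_eq_abs, sq_abs]
  have n6 : ‖4 * (a : ℂ) - 6‖ ^ 2 = (4 * a - 6) ^ 2 := by
    rw [show 4 * (a : ℂ) - 6 = ((4 * a - 6 : ℝ) : ℂ) by push_cast; rfl, Complex.norm_real,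
      Real.norm_eq_abs, sq_abs]
  simp only [norm_mul, norm_div, mul_pow, div_pow, n1, n2, n3, n4, n5, n6]
  have e1 : ∀ A B C D E F : ℝ, A / B / (C / D) * (E / F) = (A * D * E) / (B * C * F) := by
    intros; field_simp
  rw [e1]
  have p1 : 0.68 ≤ (a - 1) ^ 2 ∧ (a - 1) ^ 2 ≤ 0.71 := by constructor <;> nlinarith
  have p2 : 1.74 ≤ (4 * a - 6) ^ 2 ∧ (4 * a - 6) ^ 2 ≤ 1.86 := by constructor <;> nlinarith
  have p3 : 2.3 ≤ a ^ 2 - 1 ∧ a ^ 2 - 1 ≤ 2.4 := by constructor <;> nlinarith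
  have p4 : 60 ≤ 16 * a ^ 2 + 8 * a - 4 ∧ 16 * a ^ 2 + 8 * a - 4 ≤ 66 := by
    constructor <;> nlinarith
  have p5 : 5.3 ≤ 3 * a ^ 2 - 2 * a - 1 ∧ 3 * a ^ 2 - 2 * a - 1 ≤ 5.6 := by
    constructor <;> nlinarith
  have p6 : 1.3 ≤ 3 * a ^ 2 - 2 * a - 5 ∧ 3 * a ^ 2 - 2 * a - 5 ≤ 1.6 := by
    constructor <;> nlinarith
  generalize (a - 1) ^ 2 = x1 at *
  generalize (4 * a - 6) ^ 2 = x2 at *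
  generalize a ^ 2 - 1 = x3 at *
  generalize 16 * a ^ 2 + 8 * a - 4 = x4 at *
  generalize 3 * a ^ 2 - 2 * a - 1 = x5 at *
  generalize 3 * a ^ 2 - 2 * a - 5 = x6 at *
  have d1 : 1.74 * 2.3 * 1.3 ≤ x2 * x3 * x6 := by
    have := p2.1; have := p3.1; have := p6.1
    gcongr
  have d2 : x2 * x3 * x6 ≤ 1.86 * 2.4 * 1.6 := by
    have := p2.2; have := p3.2; have := p6.2
    gcongr <;> linarith
  have d3 : 0.68 * 60 * 5.3 ≤ x1 * x4 * x5 := by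
    have := p1.1; have := p4.1; have := p5.1
    gcongr
  have d4 : x1 * x4 * x5 ≤ 0.71 * 66 * 5.6 := by
    have := p1.2; have := p4.2; have := p5.2
    gcongr <;> linarith
  constructor
  · rw [le_div_iff₀ (by linarith)]; linarith
  · rw [div_le_iff₀ (by linarith)]; linarith

/-- With `G` from `crossDet_factor`, `|λ₂|` is a constant times `|G(β)| / |G(α)|`. Both values are at
most `8 α^(2n)`, and `|G(α)| |G(β)|² ≥ 1` bounds the quotient from both sides; this even gives
`|t| ≤ 6 n + 52`. -/
lemma exponent_bound (h : TribRoots a β γ) {n n₁ n₂ : ℕ} (h1 : n₁ < n) (h2 : n₂ < n₁)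
    (hden : crossDet β γ ((n₁ : ℤ) - n) ((n₂ : ℤ) - n) ≠ 0) {t : ℤ}
    (ht : Complex.normSq (lam2 a β γ n n₁ n₂) = a ^ t) : |t| < 80 * (n : ℤ) + 244 := by
  have hlo := h.lo
  have ha0 : 0 < a := by linarith
  have hk₁ : (n₁ : ℤ) - n = -((n - n₁ : ℕ) : ℤ) := by omega
  have hk₂ : (n₂ : ℤ) - n = -((n - n₂ : ℕ) : ℤ) := by omega
  obtain ⟨G, hG1, hG2⟩ := h.crossDet_factor (n - n₁) (n - n₂)
  obtain ⟨b1, b2⟩ := h.crossDet_norm (Nat.sub_le n n₁) (Nat.sub_le n n₂)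
  obtain ⟨c1, c2⟩ := h.const_bounds
  obtain ⟨s1, s2, -⟩ := h.norm_sub_sq
  rw [hk₁, hk₂, hG1] at hden
  have hG0 : aeval (a : ℂ) G ≠ 0 := right_ne_zero_of_mul hden
  have hfg := h.one_le_norm G hG0
  have hlam : lam2 a β γ n n₁ n₂ = ((a : ℂ) - 1) / (4 * a - 6) / ((β - 1) / (4 * β - 6)) *
      ((γ - a) / (γ - β)) * (aeval β G / aeval (a : ℂ) G) := by
    have : lam2 a β γ n n₁ n₂ = ((a : ℂ) - 1) / (4 * a - 6) / ((β - 1) / (4 * β - 6)) *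
      (crossDet a γ ((n₁ : ℤ) - n) ((n₂ : ℤ) - n) /
        crossDet β γ ((n₁ : ℤ) - n) ((n₂ : ℤ) - n)) := rfl
    rw [this, hk₁, hk₂, hG1, hG2, mul_div_mul_comm, mul_assoc]
  rw [hlam, Complex.normSq_eq_norm_sq, norm_mul, mul_pow, norm_div, div_pow] at ht
  rw [hG1, norm_mul] at b1
  rw [hG2, norm_mul] at b2
  have r1 : 1 ≤ ‖γ - a‖ := by nlinarith [norm_nonneg (γ - a)]
  have r2 : 1 ≤ ‖γ - β‖ := by nlinarith [norm_nonneg (γ - β)]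
  have hg0 : 0 < ‖aeval (a : ℂ) G‖ := norm_pos_iff.mpr hG0
  have hf0 := norm_nonneg (aeval β G)
  generalize ‖aeval (a : ℂ) G‖ = g at *
  generalize ‖aeval β G‖ = f at *
  generalize ‖((a : ℂ) - 1) / (4 * a - 6) / ((β - 1) / (4 * β - 6)) *
      ((γ - a) / (γ - β))‖ ^ 2 = c at *
  have hg : g ≤ 8 * (a ^ n) ^ 2 := by nlinarith
  have hf : f ≤ 8 * a ^ n := by nlinarith
  have hf1 : 0 < f := lt_of_le_of_ne hf0 (by rintro rfl; norm_num at hfg)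
  have ha2 : 2 ≤ a ^ 2 := by nlinarith
  have hup : f ^ 2 / g ^ 2 ≤ f ^ 6 := by
    rw [div_le_iff₀ (by positivity)]
    have : 1 ≤ (g * f ^ 2) ^ 2 := one_le_pow₀ hfg
    nlinarith [mul_le_mul_of_nonneg_left this (sq_nonneg f)]
  have hdown : (f ^ 2 / g ^ 2)⁻¹ ≤ g ^ 3 := by
    rw [inv_div, div_le_iff₀ (by positivity)]
    nlinarith [mul_le_mul_of_nonneg_left hfg (sq_nonneg g)]
  have hup' : a ^ t ≤ a ^ ((52 + 6 * n : ℕ) : ℤ) := by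
    rw [zpow_natCast]
    calc a ^ t ≤ 256 * f ^ 6 := by rw [← ht]; gcongr
      _ ≤ 256 * (8 * a ^ n) ^ 6 := by gcongr
      _ = 2 ^ 26 * (a ^ n) ^ 6 := by ring
      _ ≤ (a ^ 2) ^ 26 * (a ^ n) ^ 6 := by gcongr
      _ = a ^ (52 + 6 * n) := by ring
  have hdown' : a ^ (-t) ≤ a ^ ((18 + 6 * n : ℕ) : ℤ) := by
    rw [zpow_natCast]
    calc a ^ (-t) = c⁻¹ * (f ^ 2 / g ^ 2)⁻¹ := by rw [zpow_neg, ← ht, mul_inv]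
      _ ≤ 1 * g ^ 3 := by
        gcongr
        exact inv_le_one_of_one_le₀ c1
      _ ≤ 1 * (8 * (a ^ n) ^ 2) ^ 3 := by gcongr
      _ = 2 ^ 9 * (a ^ n) ^ 6 := by ring
      _ ≤ (a ^ 2) ^ 9 * (a ^ n) ^ 6 := by gcongr
      _ = a ^ (18 + 6 * n) := by ring
  have t1 := (zpow_le_zpow_iff_right₀ (by linarith : 1 < a)).mp hup'
  have t2 := (zpow_le_zpow_iff_right₀ (by linarith : 1 < a)).mp hdown'
  rw [abs_lt]
  push_cast at t1 t2
  constructor <;> linarith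

end TribRoots

end

/-! ### Conclusion -/

theorem mult_dep_implies_power_of_z (α β γ z : ℂ)
    (hαim : α.im = 0) (hα : α ^ 3 = α ^ 2 + α + 1)
    (hα1 : 1.83 < α.re) (hα2 : α.re < 1.84)
    (hβ : β ^ 3 = β ^ 2 + β + 1) (hβim : β.im ≠ 0)
    (hγ : γ = (starRingEnd ℂ) β)
    (hzmem : z ∈ IntermediateField.adjoin ℚ ({α, β} : Set ℂ))
    (hz : z ^ 3 = α / β)
    (n n₁ n₂ : ℕ) (h1 : n₁ < n) (h2 : n₂ < n₁)
    (hden : (1 - β ^ ((n₁ : ℤ) - (n : ℤ))) * (1 - γ ^ ((n₂ : ℤ) - (n : ℤ))) -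
        (1 - β ^ ((n₂ : ℤ) - (n : ℤ))) * (1 - γ ^ ((n₁ : ℤ) - (n : ℤ))) ≠ 0)
    (hdep : ∃ A B : ℤ, (A ≠ 0 ∨ B ≠ 0) ∧ (α / β) ^ A = lam2 α β γ n n₁ n₂ ^ B) :
    ∃ t : ℤ, |t| < 80 * (n : ℤ) + 244 ∧
      (lam2 α β γ n n₁ n₂ = z ^ t ∨ lam2 α β γ n n₁ n₂ = -z ^ t) := by
  obtain ⟨a, rfl⟩ : ∃ a : ℝ, α = a := ⟨α.re, Complex.ext rfl (by simpa using hαim)⟩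
  rw [Complex.ofReal_re] at hα1 hα2
  have hγ3 : γ ^ 3 = γ ^ 2 + γ + 1 := by
    rw [hγ]; simpa using congrArg (starRingEnd ℂ) hβ
  have hβγ : β - γ ≠ 0 := by
    intro h0
    have := congrArg Complex.im h0
    simp [hγ] at this
    exact hβim this
  have haβ : (a : ℂ) - β ≠ 0 := by
    intro h0
    have := congrArg Complex.im h0
    simp at this
    exact hβim this
  have haγ : (a : ℂ) - γ ≠ 0 := by
    intro h0
    have := congrArg Complex.im h0
    simp [hγ] at this
    exact hβim this
  -- Vieta's formulas, from the divided differences of the cubic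
  have q1 : (a : ℂ) ^ 2 + a * β + β ^ 2 - a - β - 1 = 0 := by
    apply mul_left_cancel₀ haβ; linear_combination hα - hβ
  have q2 : γ ^ 2 + γ * β + β ^ 2 - γ - β - 1 = 0 := by
    apply mul_left_cancel₀ hβγ; linear_combination hβ - hγ3
  have e1 : (a : ℂ) + β + γ = 1 := by
    have : (a : ℂ) + β + γ - 1 = 0 := by
      apply mul_left_cancel₀ haγ; linear_combination q1 - q2
    linear_combination this
  have e2 : (a : ℂ) * β + a * γ + β * γ = -1 := by
    linear_combination ((a : ℂ) + β) * e1 - q1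
  have h : TribRoots a β γ :=
    ⟨hα1, hα2, hγ, hβim, e1, e2, by linear_combination hα + (a : ℂ) * e2 - (a : ℂ) ^ 2 * e1⟩
  have ha0 : 0 < a := by linarith
  have hβ0 : β ≠ 0 := by rintro rfl; simp at hβim
  have hq0 : (a : ℂ) / β ≠ 0 := div_ne_zero h.a_ne hβ0
  have hz0 : z ≠ 0 := by rintro rfl; exact hq0 (by rw [← hz]; norm_num)
  have hqns : Complex.normSq ((a : ℂ) / β) = a ^ (3 : ℤ) := by
    have := h.normSq_β
    rw [Complex.normSq_div, Complex.normSq_ofReal, eq_inv_of_mul_eq_one_right this]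
    field_simp
  have hzns : Complex.normSq z = a := by
    refine (pow_left_inj₀ (Complex.normSq_nonneg z) ha0.le (n := 3) (by norm_num)).mp ?_
    rw [← map_pow, hz, hqns]; norm_cast
  obtain ⟨A, B, hAB, hrel⟩ := hdep
  have hns := congrArg Complex.normSq hrel
  rw [map_zpow₀, map_zpow₀, hqns, ← zpow_mul] at hns
  have hB : B ≠ 0 := by
    rintro rfl
    rw [zpow_zero, zpow_eq_one_iff_right₀ ha0.le (by linarith)] at hns
    omega
  have hw0 : lam2 a β γ n n₁ n₂ ≠ 0 := by
    intro h0
    rw [h0, zero_zpow _ hB] at hrel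
    exact zpow_ne_zero _ hq0 hrel
  have hwmem : lam2 a β γ n n₁ n₂ ∈ IntermediateField.adjoin ℚ ({(a : ℂ), β} : Set ℂ) := by
    set K := IntermediateField.adjoin ℚ ({(a : ℂ), β} : Set ℂ)
    have ma : (a : ℂ) ∈ K := IntermediateField.subset_adjoin _ _ (by simp)
    have mβ : β ∈ K := IntermediateField.subset_adjoin _ _ (by simp)
    have mγ : γ ∈ K := by
      rw [show γ = 1 - a - β by linear_combination e1]
      exact sub_mem (sub_mem (one_mem _) ma) mβ
    have m1 (x : ℂ) (hx : x ∈ K) (k : ℤ) : 1 - x ^ k ∈ K := sub_mem (one_mem _) (zpow_mem hx _)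
    have m2 (x : ℂ) (hx : x ∈ K) : (x - 1) / (4 * x - 6) ∈ K :=
      div_mem (sub_mem hx (one_mem _)) (sub_mem (mul_mem (ofNat_mem K 4) hx) (ofNat_mem K 6))
    exact mul_mem (div_mem (m2 _ ma) (m2 _ mβ)) (div_mem
      (sub_mem (mul_mem (m1 _ ma _) (m1 _ mγ _)) (mul_mem (m1 _ ma _) (m1 _ mγ _)))
      (sub_mem (mul_mem (m1 _ mβ _) (m1 _ mγ _)) (mul_mem (m1 _ mβ _) (m1 _ mγ _))))
  obtain ⟨p, hp, q, hq, hwpq⟩ := h.mem_splitting hwmem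
  obtain ⟨t, ht, htB⟩ := h.eq_zpow_of_zpow_eq (Complex.normSq_pos.mpr hw0)
    (by rw [hwpq]; exact h.normSq_mem hp hq) hB hns.symm
  refine ⟨t, h.exponent_bound h1 h2 hden ht, ?_⟩
  have hζ : (lam2 a β γ n n₁ n₂ / z ^ t) ^ B.natAbs = 1 := by
    have : (lam2 a β γ n n₁ n₂ / z ^ t) ^ B = 1 := by
      rw [div_zpow, ← hrel, ← hz, ← zpow_mul, ← htB, ← zpow_natCast, ← zpow_mul]
      exact div_self (zpow_ne_zero _ hz0)
    rcases Int.natAbs_eq B with e | e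
    · rw [← zpow_natCast, ← e]; exact this
    · rw [← zpow_natCast, show (B.natAbs : ℤ) = -B by omega, zpow_neg, this, inv_one]
  rcases h.root_of_unity (div_mem hwmem (zpow_mem hzmem t)) (by omega) hζ with e | e
  · left; rwa [div_eq_one_iff_eq (zpow_ne_zero _ hz0)] at e
  · right
    rw [div_eq_iff (zpow_ne_zero _ hz0)] at e
    rw [e]; ring
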